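/- Let φ be a set of assignments over a finite type V of propositional variables, regarded as an Ordered Solution Domain with all domains equal to Bool and the preference order given by inclusion of true-sets (α' ⪯ α iff {w : α' w = true} ⊆ {w : α w = true}), so that optimal solutions are exactly the minimal models of φ. Then a variable v is settled if and only if v is dispensable w.r.t. φ or v is assigned true in every model of φ. -/

import Mathlib

/-- A set of variables `X` is deselectable w.r.t. `φ` if some model of `φ`
assigns `false` to every variable in `X`. -/
def Deselectable {V : Type*} (φ : Set (V → Bool)) (X : Set V) : Prop :=
  ∃ α ∈ φ, ∀ v ∈ X, α v = false

/-- A variable `v` is dispensable w.r.t. `φ` if every deselectable set stays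
deselectable after adding `v`. -/
def Dispensable {V : Type*} (φ : Set (V → Bool)) (v : V) : Prop :=
  ∀ X : Set V, Deselectable φ X → Deselectable φ (X ∪ {v})

/-- A model `α` of `φ` is minimal if no model of `φ` has a strictly smaller
true-set.  Under the preference order given by inclusion of true-sets the
optimal solutions are exactly the minimal models. -/
def MinimalModel {V : Type*} (φ : Set (V → Bool)) (α : V → Bool) : Prop :=
  α ∈ φ ∧ ¬ ∃ α' ∈ φ, {w | α' w = true} ⊂ {w | α w = true}

/-- A variable `v` is settled if some Boolean value is assigned to `v` by every
minimal model of `φ`. -/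
def SettledVar {V : Type*} (φ : Set (V → Bool)) (v : V) : Prop :=
  ∃ b : Bool, ∀ α : V → Bool, MinimalModel φ α → α v = b

/-!
Both alternatives can be read off the pointwise order on assignments: `v` is dispensable iff below
every model there is a model with `v` false, and `v` is always true iff below every model there is a
model with `v` true. When every model lies above a minimal one, a property of models holds at all
minimal models iff below every model there is a model with that property.
-/

section Order

variable {α : Type*}

theorem isCoinitialFor_minimal_of_finite [Preorder α] {s : Set α} (hs : s.Finite) :
    IsCoinitialFor s {a | Minimal (· ∈ s) a} := by
  intro a ha
  obtain ⟨m, hma, hm⟩ := hs.exists_le_minimal ha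
  exact ⟨m, hm, hma⟩

theorem forall_minimal_iff_forall_exists_le [PartialOrder α] {s : Set α} {p : α → Prop}
    (hs : IsCoinitialFor s {a | Minimal (· ∈ s) a}) :
    (∀ a, Minimal (· ∈ s) a → p a) ↔ ∀ a ∈ s, ∃ b ∈ s, b ≤ a ∧ p b := by
  constructor
  · intro h a ha
    obtain ⟨m, hm, hma⟩ := hs ha
    exact ⟨m, hm.prop, hma, h m hm⟩
  · intro h m hm
    obtain ⟨b, hb, hbm, hpb⟩ := h m hm.prop
    exact hm.eq_of_le hb hbm ▸ hpb

theorem forall_exists_le_iff_of_monotone [Preorder α] {s : Set α} {p : α → Prop}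
    (hp : Monotone p) : (∀ a ∈ s, ∃ b ∈ s, b ≤ a ∧ p b) ↔ ∀ a ∈ s, p a := by
  constructor
  · intro h a ha
    obtain ⟨b, -, hba, hpb⟩ := h a ha
    exact hp hba hpb
  · exact fun h a ha => ⟨a, ha, le_rfl, h a ha⟩

end Order

section Assignment

variable {V : Type*} {φ : Set (V → Bool)} {v : V}

theorem minimalModel_iff_minimal {α : V → Bool} :
    MinimalModel φ α ↔ Minimal (· ∈ φ) α := by
  -- `a ≤ b` on `Bool` unfolds to `a = true → b = true`.
  have setOf_ssubset_iff_lt (β : V → Bool) :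
      {w | β w = true} ⊂ {w | α w = true} ↔ β < α := Iff.rfl
  simp only [MinimalModel, setOf_ssubset_iff_lt, minimal_iff_forall_lt, not_exists, not_and]
  exact and_congr_right fun _ => forall_congr' fun _ => imp_not_comm

theorem dispensable_iff_forall_exists_le_eq_false :
    Dispensable φ v ↔ ∀ α ∈ φ, ∃ β ∈ φ, β ≤ α ∧ β v = false := by
  constructor
  · intro hv α hα
    obtain ⟨β, hβ, hβ_false⟩ := hv {w | α w = false} ⟨α, hα, fun _ hw => hw⟩
    have hβα : β ≤ α := fun w => by
      by_cases hw : α w = false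
      · exact (hβ_false w (.inl hw)).trans_le (Bool.false_le _)
      · rw [Bool.eq_true_of_not_eq_false hw]
        exact Bool.le_true _
    exact ⟨β, hβ, hβα, hβ_false v (.inr rfl)⟩
  · rintro h X ⟨α, hα, hαX⟩
    obtain ⟨β, hβ, hβα, hβv⟩ := h α hα
    refine ⟨β, hβ, ?_⟩
    rintro w (hw | rfl)
    · exact Bool.eq_false_of_le_false ((hβα w).trans_eq (hαX w hw))
    · exact hβv

theorem settledVar_iff_exists_forall_exists_le
    (hφ : IsCoinitialFor φ {α | Minimal (· ∈ φ) α}) :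
    SettledVar φ v ↔ ∃ b, ∀ α ∈ φ, ∃ β ∈ φ, β ≤ α ∧ β v = b := by
  simp only [SettledVar, minimalModel_iff_minimal, forall_minimal_iff_forall_exists_le hφ]

end Assignment

theorem settled_iff_dispensable_or_always_true_general
    {V : Type*} (φ : Set (V → Bool)) (hφ : IsCoinitialFor φ {α | Minimal (· ∈ φ) α}) (v : V) :
    SettledVar φ v ↔ Dispensable φ v ∨ ∀ α ∈ φ, α v = true := by
  have monotone_eq_true : Monotone fun α : V → Bool => α v = true := fun _ _ hle => hle v
  rw [settledVar_iff_exists_forall_exists_le hφ, Bool.exists_bool,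
    ← dispensable_iff_forall_exists_le_eq_false,
    forall_exists_le_iff_of_monotone monotone_eq_true]

theorem settled_iff_dispensable_or_always_true
    {V : Type*} [Finite V] (φ : Set (V → Bool)) (v : V) :
    SettledVar φ v ↔ Dispensable φ v ∨ ∀ α ∈ φ, α v = true :=
  settled_iff_dispensable_or_always_true_general φ
    (isCoinitialFor_minimal_of_finite φ.toFinite) v
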